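/- Let K be a countably infinite field with characteristic different from 2, and let E ⊆ K² be a set with positive upper Banach density (with respect to the additive group (K²,+)). Then for every z ∈ K there exist points (x₁, x₂), (y₁, y₂) ∈ E such that (x₁ − y₁)² − (x₂ − y₂)² = z. -/

import Mathlib

open Filter Topology Pointwise
open scoped Classical

/-- A (additive) Følner sequence in a countable abelian group. -/
def IsAddFolner {A : Type*} [AddCommGroup A] (F : ℕ → Finset A) : Prop :=
  (∀ n, (F n).Nonempty) ∧
    ∀ a : A, Tendsto
      (fun n => ((F n ∩ (F n).image (· + a)).card : ℝ) / ((F n).card : ℝ)) atTop (𝓝 1)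

/-- `E` has positive upper Banach density. -/
def PosUpperBanachDensity {A : Type*} [AddCommGroup A] (E : Set A) : Prop :=
  ∃ F : ℕ → Finset A, IsAddFolner F ∧
    0 < limsup (fun n => (((F n).filter (· ∈ E)).card : ℝ) / ((F n).card : ℝ)) atTop

def BddFun {X : Type*} (f : X → ℝ) : Prop := ∃ C, ∀ x, |f x| ≤ C

lemma BddFun.add {X : Type*} {f g : X → ℝ} (hf : BddFun f) (hg : BddFun g) :
    BddFun (fun x => f x + g x) := by
  obtain ⟨C, hC⟩ := hf
  obtain ⟨D, hD⟩ := hg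
  exact ⟨C + D, fun x => (abs_add_le _ _).trans (add_le_add (hC x) (hD x))⟩

lemma BddFun.smul {X : Type*} {f : X → ℝ} (c : ℝ) (hf : BddFun f) :
    BddFun (fun x => c * f x) := by
  obtain ⟨C, hC⟩ := hf
  exact ⟨|c| * C, fun x => by
    rw [abs_mul]; exact mul_le_mul_of_nonneg_left (hC x) (abs_nonneg _)⟩

lemma BddFun.const {X : Type*} (c : ℝ) : BddFun (fun _ : X => c) := ⟨|c|, fun _ => le_rfl⟩

lemma BddFun.mul {X : Type*} {f g : X → ℝ} (hf : BddFun f) (hg : BddFun g) :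
    BddFun (fun x => f x * g x) := by
  obtain ⟨C, hC⟩ := hf
  obtain ⟨D, hD⟩ := hg
  exact ⟨C * D, fun x => by
    rw [abs_mul]
    exact mul_le_mul (hC x) (hD x) (abs_nonneg _) ((abs_nonneg _).trans (hC x))⟩

lemma BddFun.comp {X Y : Type*} {f : X → ℝ} (hf : BddFun f) (g : Y → X) :
    BddFun (fun y => f (g y)) := by
  obtain ⟨C, hC⟩ := hf
  exact ⟨C, fun y => hC _⟩

lemma BddFun.sum {X ι : Type*} {s : Finset ι} {f : ι → X → ℝ} (hf : ∀ i, BddFun (f i)) :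
    BddFun (fun x => ∑ i ∈ s, f i x) := by
  induction s using Finset.induction_on with
  | empty => simpa using BddFun.const 0
  | insert a s ha ih => simpa [Finset.sum_insert ha] using (hf a).add ih

structure IsMean {X : Type*} (M : (X → ℝ) → ℝ) : Prop where
  add : ∀ f g, BddFun f → BddFun g → M (fun x => f x + g x) = M f + M g
  smul : ∀ (c : ℝ) f, BddFun f → M (fun x => c * f x) = c * M f
  nonneg : ∀ f, BddFun f → (∀ x, 0 ≤ f x) → 0 ≤ M f
  one : M (fun _ => 1) = 1

namespace IsMean

variable {X : Type*} {M : (X → ℝ) → ℝ}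

lemma const (h : IsMean M) (c : ℝ) : M (fun _ => c) = c := by
  simpa [h.one] using h.smul c (fun _ => 1) (BddFun.const 1)

lemma mono (h : IsMean M) {f g : X → ℝ} (hf : BddFun f) (hg : BddFun g) (hfg : ∀ x, f x ≤ g x) :
    M f ≤ M g := by
  have h1 := h.nonneg (fun x => g x + (-1) * f x) (hg.add (hf.smul _)) (fun x => by
    linarith [hfg x])
  rw [h.add _ _ hg (hf.smul _), h.smul _ _ hf] at h1
  linarith

lemma abs_le (h : IsMean M) {f : X → ℝ} {C : ℝ} (hf : ∀ x, |f x| ≤ C) : |M f| ≤ C := by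
  have hb : BddFun f := ⟨C, hf⟩
  rw [_root_.abs_le]
  constructor
  · rw [← h.const (-C)]
    exact h.mono (BddFun.const _) hb fun x => (_root_.abs_le.1 (hf x)).1
  · rw [← h.const C]
    exact h.mono hb (BddFun.const _) fun x => (_root_.abs_le.1 (hf x)).2

lemma sum (h : IsMean M) {ι : Type*} (s : Finset ι) (f : ι → X → ℝ) (hf : ∀ i, BddFun (f i)) :
    M (fun x => ∑ i ∈ s, f i x) = ∑ i ∈ s, M (f i) := by
  induction s using Finset.induction_on with
  | empty => simpa using h.const 0
  | insert a s ha ih =>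
    simp only [Finset.sum_insert ha]
    rw [h.add _ _ (hf a) (BddFun.sum hf), ih]

lemma sq_le (h : IsMean M) {f : X → ℝ} (hf : BddFun f) :
    (M f) ^ 2 ≤ M (fun x => f x * f x) := by
  have h1 := h.mono (f := fun x => (2 * M f) * f x + (-(M f) ^ 2)) (g := fun x => f x * f x)
    ((hf.smul _).add (BddFun.const _)) (hf.mul hf) (fun x => by nlinarith [sq_nonneg (f x - M f)])
  rw [h.add _ _ (hf.smul _) (BddFun.const _), h.smul _ _ hf, h.const] at h1
  nlinarith

end IsMean

lemma isMean_avg {X ι : Type*} (s : Finset ι) (hs : s.Nonempty) (N : ι → (X → ℝ) → ℝ)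
    (hN : ∀ i, IsMean (N i)) : IsMean (fun f => (∑ i ∈ s, N i f) / (s.card : ℝ)) := by
  have hc : (s.card : ℝ) ≠ 0 := by exact_mod_cast hs.card_ne_zero
  refine ⟨?_, ?_, ?_, ?_⟩
  · intro f g hf hg
    simp only [fun i => (hN i).add f g hf hg, Finset.sum_add_distrib, add_div]
  · intro c f hf
    simp only [fun i => (hN i).smul c f hf, ← Finset.mul_sum, mul_div_assoc]
  · intro f hf h0
    exact div_nonneg (Finset.sum_nonneg fun i _ => (hN i).nonneg f hf h0) (by positivity)
  · simp [(hN _).one, hc]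

lemma isMean_eval {X : Type*} (x : X) : IsMean (fun f : X → ℝ => f x) :=
  ⟨fun _ _ _ _ => rfl, fun _ _ _ => rfl, fun _ _ h => h x, rfl⟩

lemma isMean_comp {X Y : Type*} {M : (X → ℝ) → ℝ} (h : IsMean M) (g : X → Y) :
    IsMean (fun f : Y → ℝ => M (fun x => f (g x))) :=
  ⟨fun _ _ hf hf' => h.add _ _ (hf.comp g) (hf'.comp g), fun c _ hf => h.smul c _ (hf.comp g),
    fun _ hf h0 => h.nonneg _ (hf.comp g) fun x => h0 _, h.one⟩

lemma exists_ulim {X : Type*} (U : Ultrafilter ℕ) (Ms : ℕ → (X → ℝ) → ℝ)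
    (h : ∀ n, IsMean (Ms n)) :
    ∃ M : (X → ℝ) → ℝ, IsMean M ∧
      ∀ f, BddFun f → Tendsto (fun n => Ms n f) (U : Filter ℕ) (𝓝 (M f)) := by
  have hex : ∀ f : X → ℝ, ∃ a : ℝ, BddFun f →
      Tendsto (fun n => Ms n f) (U : Filter ℕ) (𝓝 a) := by
    intro f
    by_cases hf : BddFun f
    · obtain ⟨C, hC⟩ := hf
      have hK : IsCompact (Set.Icc (-C) C) := isCompact_Icc
      obtain ⟨a, _, ha⟩ := hK.ultrafilter_le_nhds (U.map (fun n => Ms n f)) (by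
        rw [Filter.le_principal_iff]
        exact Filter.mem_map.2 (Filter.Eventually.of_forall fun n =>
          _root_.abs_le.1 ((h n).abs_le hC)))
      exact ⟨a, fun _ => ha⟩
    · exact ⟨0, fun h => absurd h hf⟩
  choose M hM using hex
  refine ⟨M, ⟨?_, ?_, ?_, ?_⟩, hM⟩
  · intro f g hf hg
    refine tendsto_nhds_unique (hM _ (hf.add hg)) ?_
    simp only [fun n => (h n).add f g hf hg]
    exact (hM f hf).add (hM g hg)
  · intro c f hf
    refine tendsto_nhds_unique (hM _ (hf.smul c)) ?_
    simp only [fun n => (h n).smul c f hf]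
    exact (hM f hf).const_mul c
  · intro f hf h0
    exact ge_of_tendsto' (hM f hf) fun n => (h n).nonneg f hf h0
  · refine tendsto_nhds_unique (hM _ (BddFun.const 1)) ?_
    simp only [fun n => (h n).one]
    exact tendsto_const_nhds

lemma exists_mean_step {G : Type*} [CommGroup G] {M : (G → ℝ) → ℝ} (hM : IsMean M) (g : G) :
    ∃ M' : (G → ℝ) → ℝ, IsMean M' ∧ (∀ f, BddFun f → M' (fun x => f (g * x)) = M' f) ∧
      ∀ t : G, (∀ f, BddFun f → M (fun x => f (t * x)) = M f) →
        ∀ f, BddFun f → M' (fun x => f (t * x)) = M' f := by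
  obtain ⟨M', hM', hl⟩ := exists_ulim (Filter.hyperfilter ℕ)
    (fun n f => (∑ a ∈ Finset.range (n + 1), M (fun x => f (g ^ a * x))) /
      ((Finset.range (n + 1)).card : ℝ))
    (fun n => isMean_avg _ (by simp) (fun a f => M (fun x => f (g ^ a * x)))
      (fun a => isMean_comp hM _))
  refine ⟨M', hM', ?_, ?_⟩
  · intro f hf
    obtain ⟨C, hC⟩ := id hf
    have h1 := (hl _ (hf.comp (g * ·))).sub (hl f hf)
    have h2 : Tendsto (fun n : ℕ => 2 * C * (1 / ((n : ℝ) + 1)))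
        (Filter.hyperfilter ℕ : Filter ℕ) (𝓝 0) := by
      have := (tendsto_one_div_add_atTop_nhds_zero_nat (𝕜 := ℝ)).const_mul (2 * C)
      rw [mul_zero] at this
      exact this.mono_left (Nat.hyperfilter_le_atTop)
    refine sub_eq_zero.1 (tendsto_nhds_unique h1 (squeeze_zero_norm (fun n => ?_) h2))
    rw [← sub_div, ← Finset.sum_sub_distrib]
    have : ∀ a, M (fun x => f (g * (g ^ a * x))) = M (fun x => f (g ^ (a + 1) * x)) := by
      intro a; simp only [pow_succ', mul_assoc]
    simp only [this]
    rw [Finset.sum_range_sub (fun a => M (fun x => f (g ^ a * x)))]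
    have b1 : |M (fun x => f (g ^ (n + 1) * x))| ≤ C := hM.abs_le fun x => hC _
    have b2 : |M (fun x => f (g ^ 0 * x))| ≤ C := hM.abs_le fun x => hC _
    rw [Real.norm_eq_abs, abs_div, Finset.card_range]
    push_cast
    rw [abs_of_pos (by positivity : (0 : ℝ) < n + 1), mul_one_div]
    gcongr
    refine (abs_sub _ _).trans ?_
    linarith
  · intro t ht f hf
    refine tendsto_nhds_unique (hl _ (hf.comp (t * ·))) ?_
    refine (hl f hf).congr fun n => ?_
    congr 1
    refine Finset.sum_congr rfl fun a _ => ?_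
    rw [← ht _ (hf.comp _)]
    simp only [mul_left_comm]

lemma exists_invariant_mean (G : Type*) [CommGroup G] [Countable G] :
    ∃ M : (G → ℝ) → ℝ, IsMean M ∧ ∀ t f, BddFun f → M (fun x => f (t * x)) = M f := by
  obtain ⟨e, he⟩ := exists_surjective_nat G
  have : ∀ k : ℕ, ∃ M : (G → ℝ) → ℝ, IsMean M ∧
      ∀ i < k, ∀ f, BddFun f → M (fun x => f (e i * x)) = M f := by
    intro k
    induction k with
    | zero => exact ⟨_, isMean_eval 1, by simp⟩
    | succ k ih =>
      obtain ⟨M, hM, hi⟩ := ih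
      obtain ⟨M', hM', h1, h2⟩ := exists_mean_step hM (e k)
      refine ⟨M', hM', fun i hik => ?_⟩
      rcases Nat.lt_succ_iff_lt_or_eq.1 hik with h | rfl
      · exact h2 _ (hi i h)
      · exact h1
  choose Ms hMs hinv using this
  obtain ⟨M, hM, hl⟩ := exists_ulim (Filter.hyperfilter ℕ) Ms hMs
  refine ⟨M, hM, fun t f hf => ?_⟩
  obtain ⟨i, rfl⟩ := he t
  refine tendsto_nhds_unique (hl _ (hf.comp _)) ((hl f hf).congr' ?_)
  have : ∀ᶠ n in (Filter.hyperfilter ℕ : Filter ℕ), i < n :=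
    Nat.hyperfilter_le_atTop (eventually_gt_atTop i)
  filter_upwards [this] with n hn
  exact (hinv n i hn f hf).symm

lemma exists_density_mean {A : Type*} [AddCommGroup A] (E : Set A)
    (hE : PosUpperBanachDensity E) :
    ∃ M : (A → ℝ) → ℝ, IsMean M ∧ (∀ t f, BddFun f → M (fun x => f (x + t)) = M f) ∧
      0 < M (E.indicator 1) := by
  obtain ⟨F, ⟨hne, hF⟩, hpos⟩ := hE
  obtain ⟨δ, hδ0, hδ⟩ := exists_between hpos
  have hfr := frequently_lt_of_lt_limsup (by
    refine IsCoboundedUnder.of_frequently_ge (a := 0) ?_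
    exact Frequently.of_forall fun n => by positivity) hδ
  obtain ⟨U, hU, hUδ⟩ : ∃ U : Ultrafilter ℕ, (U : Filter ℕ) ≤ atTop ∧
      ∀ᶠ n in (U : Filter ℕ), δ < (((F n).filter (· ∈ E)).card : ℝ) / ((F n).card : ℝ) := by
    have : NeBot (atTop ⊓ 𝓟 {n | δ < (((F n).filter (· ∈ E)).card : ℝ) / ((F n).card : ℝ)}) :=
      Filter.frequently_mem_iff_neBot.1 hfr
    have hle := Ultrafilter.of_le (atTop ⊓
      𝓟 {n | δ < (((F n).filter (· ∈ E)).card : ℝ) / ((F n).card : ℝ)})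
    exact ⟨Ultrafilter.of _, hle.trans inf_le_left, hle.trans inf_le_right (mem_principal_self _)⟩
  obtain ⟨M, hM, hl⟩ := exists_ulim U
    (fun n f => (∑ i ∈ F n, f i) / ((F n).card : ℝ))
    (fun n => isMean_avg _ (hne n) (fun a f => f a) (fun a => isMean_eval a))
  have hb : BddFun (E.indicator (1 : A → ℝ)) := ⟨1, fun x => by
    by_cases hx : x ∈ E <;> simp [hx]⟩
  refine ⟨M, hM, ?_, ?_⟩
  · intro t f hf
    obtain ⟨C, hC⟩ := id hf
    have h1 := (hl _ (hf.comp (· + t))).sub (hl f hf)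
    have h2 : Tendsto (fun n => 2 * C * (1 - ((F n ∩ (F n).image (· + t)).card : ℝ) /
        ((F n).card : ℝ))) (U : Filter ℕ) (𝓝 0) := by
      have := ((hF t).const_sub 1).const_mul (2 * C)
      rw [sub_self, mul_zero] at this
      exact this.mono_left hU
    refine sub_eq_zero.1 (tendsto_nhds_unique h1 (squeeze_zero_norm (fun n => ?_) h2))
    have hc : (0 : ℝ) < (F n).card := by exact_mod_cast (hne n).card_pos
    set I := (F n).image (· + t) with hI
    have hIc : I.card = (F n).card := Finset.card_image_of_injective _ (add_left_injective t)
    have hs : ∑ i ∈ F n, f (i + t) = ∑ i ∈ I, f i := by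
      rw [hI, Finset.sum_image (fun a _ b _ h => add_left_injective t h)]
    rw [← sub_div, hs]
    have e1 := Finset.sum_inter_add_sum_sdiff I (F n) f
    have e2 := Finset.sum_inter_add_sum_sdiff (F n) I f
    rw [Finset.inter_comm] at e1
    have hbd : ∀ s : Finset A, |∑ i ∈ s, f i| ≤ s.card * C := by
      intro s
      refine (Finset.abs_sum_le_sum_abs _ _).trans ?_
      refine (Finset.sum_le_sum fun i _ => hC i).trans ?_
      simp
    have c1 : ((F n ∩ I).card : ℝ) + (I \ F n).card = (F n).card := by
      rw [← hIc, Finset.inter_comm]; exact_mod_cast Finset.card_inter_add_card_sdiff I (F n)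
    have c2 : ((F n ∩ I).card : ℝ) + (F n \ I).card = (F n).card := by
      exact_mod_cast Finset.card_inter_add_card_sdiff (F n) I
    have d1 := abs_le.1 (hbd (I \ F n))
    have d2 := abs_le.1 (hbd (F n \ I))
    rw [Real.norm_eq_abs, abs_div, abs_of_pos hc, div_le_iff₀ hc]
    have : 2 * C * (1 - ((F n ∩ I).card : ℝ) / (F n).card) * (F n).card
        = 2 * C * ((F n).card - (F n ∩ I).card) := by
      field_simp
    rw [this, ← e1, ← e2, abs_le]
    have q1 : ((I \ F n).card : ℝ) = (F n).card - (F n ∩ I).card := by linarith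
    have q2 : ((F n \ I).card : ℝ) = (F n).card - (F n ∩ I).card := by linarith
    rw [q1] at d1
    rw [q2] at d2
    constructor <;> linarith [d1.1, d1.2, d2.1, d2.2]
  · refine lt_of_lt_of_le hδ0 (ge_of_tendsto (hl _ hb) ?_)
    filter_upwards [hUδ] with n hn
    refine hn.le.trans (le_of_eq ?_)
    congr 1
    simp [Set.indicator_apply]

lemma quad_finite {K : Type*} [Field K] (A B D : K) (h : ¬ (A = 0 ∧ B = 0 ∧ D = 0)) :
    {u : K | A * u ^ 2 + B * u + D = 0}.Finite := by
  have hp : (Polynomial.C A * Polynomial.X ^ 2 + Polynomial.C B * Polynomial.X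
      + Polynomial.C D : Polynomial K) ≠ 0 := by
    intro h0
    apply h
    refine ⟨?_, ?_, ?_⟩
    · simpa [Polynomial.coeff_X, Polynomial.coeff_C] using congrArg (fun q => Polynomial.coeff q 2) h0
    · simpa [Polynomial.coeff_X, Polynomial.coeff_C] using congrArg (fun q => Polynomial.coeff q 1) h0
    · simpa [Polynomial.coeff_X, Polynomial.coeff_C] using congrArg (fun q => Polynomial.coeff q 0) h0
  refine (Polynomial.finite_setOfPred_isRoot hp).subset ?_
  intro u hu
  simpa [Polynomial.IsRoot] using hu

lemma tendsto_shift1 {K : Type*} [Field K] (d : K × K) :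
    Tendsto (fun u : K => (d - (u, u)).1 * (d - (u, u)).2) cofinite cofinite := by
  apply Filter.Tendsto.cofinite_of_finite_preimage_singleton
  intro k
  refine (quad_finite 1 (-(d.1 + d.2)) (d.1 * d.2 - k) (by simp)).subset ?_
  intro u hu
  simp only [Set.mem_preimage, Set.mem_singleton_iff, Prod.fst_sub, Prod.snd_sub] at hu
  simp only [Set.mem_ofPred_eq]
  linear_combination hu

lemma tendsto_shift2 {K : Type*} [Field K] (z : K) (hz : z ≠ 0) (d : K × K) (hd : d ≠ 0) :
    Tendsto (fun u : K => (d - (u, z / u)).1 * (d - (u, z / u)).2) cofinite cofinite := by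
  apply Filter.Tendsto.cofinite_of_finite_preimage_singleton
  intro k
  refine ((quad_finite (-d.2) (d.1 * d.2 + z - k) (-d.1 * z) ?_).union
    (Set.finite_singleton 0)).subset ?_
  · rintro ⟨h1, _, h3⟩
    apply hd
    ext
    · simpa [hz] using h3
    · simpa using h1
  · intro u hu
    by_cases h0 : u = 0
    · right; simpa using h0
    left
    simp only [Set.mem_preimage, Set.mem_singleton_iff, Prod.fst_sub, Prod.snd_sub] at hu
    simp only [Set.mem_ofPred_eq]
    field_simp at hu
    linear_combination hu

structure GoodPhi {K : Type*} [Field K] (η : ℝ) (Φ : K × K → ℝ) : Prop where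
  nonneg : ∀ d, 0 ≤ Φ d
  le_one : ∀ d, Φ d ≤ 1
  symm : ∀ d, Φ (-d) = Φ d
  psd : ∀ (ι : Type) [Fintype ι] (p : ι → K × K) (c : ι → ℝ),
    η * (∑ i, c i) ^ 2 ≤ ∑ i, ∑ j, c i * c j * Φ (p i - p j)

lemma exists_limit {K : Type*} [Field K] {η : ℝ} (hη : 0 < η) {Φ : K × K → ℝ}
    (h : GoodPhi η Φ) (hinv : ∀ t : K, t ≠ 0 → ∀ d : K × K, Φ (t * d.1, t⁻¹ * d.2) = Φ d) :
    ∃ m, Tendsto (fun w : K => Φ (w, 1)) cofinite (𝓝 m) := by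
  refine tendsto_of_no_upcrossings dense_univ ?_ ?_ ?_
  · rintro a - b - hab ⟨h1, h2⟩
    rw [Filter.frequently_cofinite_iff_infinite] at h1 h2
    have hax : ∀ u : K, u ≠ 0 → Φ (u, 0) = Φ (1, 0) := by
      intro u hu
      simpa using hinv u hu (1, 0)
    set α := Φ (1, 0) with hα
    obtain ⟨t, ht⟩ := exists_gt (1 / (b - a))
    have hba : 0 < b - a := sub_pos.2 hab
    have ht1 : 1 < t * (b - a) := by rwa [div_lt_iff₀ hba] at ht
    have ht0 : 0 < t := lt_trans (by positivity) ht
    obtain ⟨k, hk⟩ := exists_nat_gt (t ^ 2 / (2 * (t * (b - a) - 1)))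
    rw [div_lt_iff₀ (by linarith)] at hk
    let A : Fin k → K := fun i => (h1.natEmbedding _ i : K)
    let B : Fin k → K := fun i => (h2.natEmbedding _ i : K)
    have hA : ∀ i, Φ (A i, 1) < a := fun i => (h1.natEmbedding _ i).2
    have hB : ∀ i, b < Φ (B i, 1) := fun i => (h2.natEmbedding _ i).2
    have hAi : Function.Injective A := fun i j hij =>
      Fin.ext ((h1.natEmbedding _).injective (Subtype.ext hij))
    have hBi : Function.Injective B := fun i j hij =>
      Fin.ext ((h2.natEmbedding _).injective (Subtype.ext hij))
    have hAB : ∀ i j, A i ≠ B j := by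
      intro i j hij
      have := hA i
      have := hB j
      rw [hij] at *
      linarith
    have key := h.psd (Unit ⊕ (Fin k ⊕ Fin k))
      (Sum.elim (fun _ => (0, 0)) (Sum.elim (fun i => (A i, 1)) (fun i => (B i, 1))))
      (Sum.elim (fun _ => -t) (Sum.elim (fun _ => -1) (fun _ => 1)))
    have hdiag : ∀ (W : Fin k → K), Function.Injective W →
        ∑ i, ∑ j, Φ (W i - W j, 0) = k * (k * α + (Φ 0 - α)) := by
      intro W hW
      have : ∀ i, ∑ j, Φ (W i - W j, 0) = k * α + (Φ 0 - α) := by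
        intro i
        have : ∀ j, Φ (W i - W j, 0) = α + if j = i then Φ 0 - α else 0 := by
          intro j
          split_ifs with hij
          · subst hij; simp; rfl
          · rw [hax _ (sub_ne_zero.2 fun e => hij (hW e).symm)]; simp
        simp [this, Finset.sum_add_distrib]
      simp only [this, Finset.sum_const, Finset.card_univ, Fintype.card_fin, nsmul_eq_mul]
    have hAB' : ∑ i, ∑ j, Φ (A i - B j, 0) = k * (k * α) := by
      simp [hax _ (sub_ne_zero.2 (hAB _ _))]
    have hBA' : ∑ i, ∑ j, Φ (B i - A j, 0) = k * (k * α) := by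
      simp [hax _ (sub_ne_zero.2 (hAB _ _).symm)]
    have hsA : ∑ i, Φ (A i, 1) ≤ k * a := by
      calc _ ≤ ∑ i : Fin k, a := Finset.sum_le_sum fun i _ => (hA i).le
        _ = _ := by simp
    have hsB : k * b ≤ ∑ i, Φ (B i, 1) := by
      calc _ = ∑ i : Fin k, b := by simp
        _ ≤ _ := Finset.sum_le_sum fun i _ => (hB i).le
    have hneg : ∀ w : K, Φ (-w, -1) = Φ (w, 1) := fun w => by
      simpa using h.symm (w, 1)
    have h00 : Φ (0, 0) = Φ 0 := rfl
    simp only [Fintype.sum_sum_type, Sum.elim_inl, Sum.elim_inr, Finset.univ_unique,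
      Finset.sum_singleton, Prod.mk_sub_mk, sub_self, zero_sub, sub_zero, hneg] at key
    simp only [Finset.sum_add_distrib, ← Finset.mul_sum, hdiag A hAi, hdiag B hBi, hAB', hBA']
      at key
    have h0 : 0 ≤ η * (-t + (∑ i : Fin k, (-1 : ℝ) + ∑ i : Fin k, (1 : ℝ))) ^ 2 := by positivity
    have hα0 : 0 ≤ α := h.nonneg _
    have hΦ0 := h.le_one 0
    have e1 : t * (k * (b - a)) ≤ t * (∑ i, Φ (B i, 1) - ∑ i, Φ (A i, 1)) :=
      mul_le_mul_of_nonneg_left (by linarith) ht0.le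
    have e2 : t ^ 2 * Φ 0 ≤ t ^ 2 * 1 := mul_le_mul_of_nonneg_left hΦ0 (by positivity)
    have e3 : (k : ℝ) * Φ 0 ≤ k * 1 := mul_le_mul_of_nonneg_left hΦ0 (by positivity)
    have e4 : 0 ≤ (k : ℝ) * α := by positivity
    nlinarith
  · exact isBoundedUnder_of ⟨1, fun w => h.le_one _⟩
  · exact isBoundedUnder_of ⟨0, fun w => h.nonneg _⟩

lemma phi_tendsto {K : Type*} [Field K] {Φ : K × K → ℝ}
    (hinv : ∀ t : K, t ≠ 0 → ∀ d : K × K, Φ (t * d.1, t⁻¹ * d.2) = Φ d) {m : ℝ}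
    (hm : Tendsto (fun w : K => Φ (w, 1)) cofinite (𝓝 m)) (g : K → K × K)
    (hg : Tendsto (fun u => (g u).1 * (g u).2) cofinite cofinite) :
    Tendsto (fun u => Φ (g u)) cofinite (𝓝 m) := by
  refine (hm.comp hg).congr' ?_
  filter_upwards [hg.eventually (eventually_cofinite_ne 0)] with u hu
  have h2 : (g u).2 ≠ 0 := right_ne_zero_of_mul hu
  have := hinv _ h2 (g u)
  rw [← this]
  simp [h2, mul_comm]

/-- the centred energy of a finite configuration -/
noncomputable def energy {K : Type*} [Field K] (Φ : K × K → ℝ) (m : ℝ) {ι : Type} [Fintype ι]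
    (p : ι → K × K) : ℝ := ∑ i, ∑ j, (Φ (p i - p j) - m)

lemma energy_double {K : Type*} [Field K] {η : ℝ} {Φ : K × K → ℝ}
    (h : GoodPhi η Φ) (m : ℝ) {ι : Type} [Fintype ι] (p : ι → K × K) (s : K × K) :
    energy Φ m (Sum.elim p (fun i => p i + s))
      = 2 * energy Φ m p + 2 * ∑ i, ∑ j, (Φ (p i - p j - s) - m) := by
  have e : ∑ i, ∑ j, (Φ (p i + s - p j) - m) = ∑ i, ∑ j, (Φ (p i - p j - s) - m) := by
    rw [Finset.sum_comm]
    refine Finset.sum_congr rfl fun i _ => Finset.sum_congr rfl fun j _ => ?_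
    rw [← h.symm]; congr 2; abel
  simp only [energy, Fintype.sum_sum_type, Sum.elim_inl, Sum.elim_inr, Finset.sum_add_distrib,
    add_sub_add_right_eq_sub, e]
  have : ∀ i j, p i - (p j + s) = p i - p j - s := fun i j => by abel
  simp only [this]
  ring

lemma core {K : Type*} [Field K] [Infinite K] {η : ℝ} (hη : 0 < η) {Φ : K × K → ℝ}
    (h : GoodPhi η Φ) (hinv : ∀ t : K, t ≠ 0 → ∀ d : K × K, Φ (t * d.1, t⁻¹ * d.2) = Φ d)
    (z : K) (hzero : ∀ d : K × K, d.1 * d.2 = z → Φ d = 0) : False := by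
  by_cases hz : z = 0
  · have := h.psd Unit (fun _ => 0) (fun _ => 1)
    simp [hzero 0 (by simp [hz])] at this
    linarith
  obtain ⟨m, hm⟩ := exists_limit hη h hinv
  have hm0 : 0 ≤ m := ge_of_tendsto' hm fun w => h.nonneg _
  -- generic shift
  have lim1 : ∀ {ι : Type} [Fintype ι] (p : ι → K × K),
      Tendsto (fun u : K => ∑ i, ∑ j, (Φ (p i - p j - (u, u)) - m)) cofinite (𝓝 0) := by
    intro ι _ p
    have : (0 : ℝ) = ∑ i : ι, ∑ j : ι, (m - m) := by simp
    rw [this]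
    exact tendsto_finsetSum _ fun i _ => tendsto_finsetSum _ fun j _ =>
      (phi_tendsto hinv hm _ (tendsto_shift1 _)).sub_const m
  -- energy is nonnegative
  have epos : ∀ {ι : Type} [Fintype ι] (p : ι → K × K), 0 ≤ energy Φ m p := by
    intro ι _ p
    have hl := (lim1 p).const_sub (energy Φ m p)
    rw [sub_zero] at hl
    refine ge_of_tendsto' hl fun u => ?_
    have key := h.psd (ι ⊕ ι) (Sum.elim p (fun i => p i + (u, u)))
      (Sum.elim (fun _ => 1) (fun _ => -1))
    have e : ∑ i, ∑ j, Φ (p i + (u, u) - p j) = ∑ i, ∑ j, Φ (p i - p j - (u, u)) := by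
      rw [Finset.sum_comm]
      refine Finset.sum_congr rfl fun i _ => Finset.sum_congr rfl fun j _ => ?_
      rw [← h.symm]; congr 1; abel
    have e' : ∀ i j, p i - (p j + (u, u)) = p i - p j - (u, u) := fun i j => by abel
    simp only [Fintype.sum_sum_type, Sum.elim_inl, Sum.elim_inr, Finset.sum_add_distrib,
      add_sub_add_right_eq_sub, e', ← Finset.mul_sum, e] at key
    simp only [energy, Finset.sum_sub_distrib]
    have h0 : 0 ≤ η * (∑ i : ι, (1 : ℝ) + ∑ i : ι, (-1 : ℝ)) ^ 2 := by positivity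
    linarith
  -- m is positive
  have spread : ∀ d : ℕ, ∃ (ι : Type) (_ : Fintype ι) (p : ι → K × K),
      Fintype.card ι = 2 ^ d ∧ energy Φ m p < 2 ^ d * 2 := by
    intro d
    induction d with
    | zero =>
      refine ⟨Unit, inferInstance, fun _ => 0, by simp, ?_⟩
      have := h.le_one 0
      simp [energy]; linarith
    | succ d ih =>
      obtain ⟨ι, _, p, hc, hp⟩ := ih
      have hl := ((lim1 p).const_mul 2).const_add (2 * energy Φ m p)
      have hev := hl.eventually_lt_const (u := 2 ^ (d + 1) * 2) (by rw [pow_succ]; linarith)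
      obtain ⟨u, hu⟩ := hev.exists
      refine ⟨ι ⊕ ι, inferInstance, Sum.elim p (fun i => p i + (u, u)), ?_, ?_⟩
      · simp [hc, pow_succ]; ring
      · rw [energy_double h]; exact hu
  have hmpos : 0 < m := by
    by_contra hneg
    have hm0 : m = 0 := le_antisymm (not_lt.1 hneg) hm0
    obtain ⟨d, hd⟩ := pow_unbounded_of_one_lt (2 / η) (one_lt_two)
    obtain ⟨ι, _, p, hc, hp⟩ := spread d
    have key := h.psd ι p (fun _ => 1)
    rw [div_lt_iff₀ hη] at hd
    simp only [Finset.sum_const, Finset.card_univ, hc, one_mul, nsmul_eq_mul, mul_one] at key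
    simp only [energy, hm0, sub_zero] at hp
    push_cast at key
    have : (0 : ℝ) < 2 ^ d := by positivity
    nlinarith
  have cube : ∀ d : ℕ, ∃ (ι : Type) (_ : Fintype ι) (p : ι → K × K),
      Nonempty ι ∧ energy Φ m p < Fintype.card ι * (1 - d * m) := by
    intro d
    induction d with
    | zero =>
      refine ⟨Unit, inferInstance, fun _ => 0, inferInstance, ?_⟩
      have := h.le_one 0
      simp [energy]; linarith
    | succ d ih =>
      obtain ⟨ι, _, p, hne, hp⟩ := ih
      have hl : Tendsto (fun u : K => ∑ i, ∑ j, (if p i = p j then -m else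
          Φ (p i - p j - (u, z / u)) - m)) cofinite
          (𝓝 (∑ i, ∑ j, (if p i = p j then -m else 0))) := by
        refine tendsto_finsetSum _ fun i _ => tendsto_finsetSum _ fun j _ => ?_
        split_ifs with hij
        · exact tendsto_const_nhds
        · simpa using (phi_tendsto hinv hm _
            (tendsto_shift2 z hz (p i - p j) (sub_ne_zero.2 hij))).sub_const m
      have hle : ∑ i, ∑ j, (if p i = p j then -m else 0) ≤ - (Fintype.card ι * m) := by
        calc _ ≤ ∑ i, ∑ j, (if i = j then -m else 0) := by
              refine Finset.sum_le_sum fun i _ => Finset.sum_le_sum fun j _ => ?_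
              by_cases hij : i = j
              · simp [hij]
              · simp only [hij, if_false]; split_ifs <;> linarith
          _ = _ := by simp
      have hl2 := (hl.const_mul 2).const_add (2 * energy Φ m p)
      have hev := hl2.eventually_lt_const
        (u := (Fintype.card (ι ⊕ ι) : ℝ) * (1 - (d + 1 : ℕ) * m))
        (by push_cast [Fintype.card_sum]; linarith)
      obtain ⟨u, hu, hu0⟩ := (hev.and (eventually_cofinite_ne 0)).exists
      refine ⟨ι ⊕ ι, inferInstance, Sum.elim p (fun i => p i + (u, z / u)), inferInstance, ?_⟩
      rw [energy_double h]
      refine lt_of_eq_of_lt ?_ hu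
      congr 2
      refine Finset.sum_congr rfl fun i _ => Finset.sum_congr rfl fun j _ => ?_
      split_ifs with hij
      · rw [hij, hzero _ (by simp; field_simp)]; simp
      · rfl
  obtain ⟨d, hd⟩ := exists_nat_gt (1 / m)
  rw [div_lt_iff₀ hmpos] at hd
  obtain ⟨ι, _, p, hne, hp⟩ := cube d
  have := epos p
  have hc : (0 : ℝ) < Fintype.card ι := by exact_mod_cast Fintype.card_pos
  nlinarith

/-- autocorrelation of `E` along the mean `M` -/
noncomputable def corr {A : Type*} [AddCommGroup A] (M : (A → ℝ) → ℝ) (E : Set A) (a : A) : ℝ :=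
  M (fun x => E.indicator 1 (x + a) * E.indicator 1 x)

lemma bdd_indicator {A : Type*} (E : Set A) : BddFun (E.indicator (1 : A → ℝ)) :=
  ⟨1, fun x => by by_cases hx : x ∈ E <;> simp [hx]⟩

lemma corr_bdd {A : Type*} [AddCommGroup A] (E : Set A) (a b : A) :
    BddFun (fun x => E.indicator (1 : A → ℝ) (x + a) * E.indicator 1 (x + b)) :=
  ((bdd_indicator E).comp (· + a)).mul ((bdd_indicator E).comp (· + b))

lemma corr_sub {A : Type*} [AddCommGroup A] {M : (A → ℝ) → ℝ}
    (hinv : ∀ t f, BddFun f → M (fun x => f (x + t)) = M f) (E : Set A) (a b : A) :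
    corr M E (a - b) = M (fun x => E.indicator 1 (x + a) * E.indicator 1 (x + b)) := by
  have hb := corr_bdd E (a - b) 0
  simp only [add_zero] at hb
  rw [corr, ← hinv b _ hb]
  congr 1
  funext x
  congr 2
  abel

lemma corr_psd {A : Type*} [AddCommGroup A] {M : (A → ℝ) → ℝ} (hM : IsMean M)
    (hinv : ∀ t f, BddFun f → M (fun x => f (x + t)) = M f) (E : Set A)
    {ι : Type} [Fintype ι] (p : ι → A) (c : ι → ℝ) :
    (M (E.indicator 1)) ^ 2 * (∑ i, c i) ^ 2 ≤ ∑ i, ∑ j, c i * c j * corr M E (p i - p j) := by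
  have hbi : ∀ i, BddFun (fun x => c i * E.indicator (1 : A → ℝ) (x + p i)) := fun i =>
    ((bdd_indicator E).comp (· + p i)).smul (c i)
  have h1 := hM.sq_le (BddFun.sum (s := Finset.univ) hbi)
  rw [hM.sum _ _ hbi] at h1
  have h2 : ∀ i, M (fun x => c i * E.indicator (1 : A → ℝ) (x + p i))
      = c i * M (E.indicator 1) := fun i => by
    rw [hM.smul _ _ ((bdd_indicator E).comp (· + p i)), hinv _ _ (bdd_indicator E)]
  simp only [h2, ← Finset.sum_mul] at h1
  have hbij : ∀ i j, BddFun (fun x => c i * c j *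
      (E.indicator (1 : A → ℝ) (x + p i) * E.indicator 1 (x + p j))) := fun i j =>
    (corr_bdd E _ _).smul _
  have h3 : ∑ i, ∑ j, c i * c j * corr M E (p i - p j) =
      M (fun x => ∑ i, ∑ j, c i * c j *
        (E.indicator (1 : A → ℝ) (x + p i) * E.indicator 1 (x + p j))) := by
    rw [hM.sum _ _ (fun i => BddFun.sum (hbij i))]
    refine Finset.sum_congr rfl fun i _ => ?_
    rw [hM.sum _ _ (hbij i)]
    refine Finset.sum_congr rfl fun j _ => ?_
    rw [hM.smul _ _ (corr_bdd E _ _), corr_sub hinv]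
  rw [h3]
  calc _ = _ := by ring
    _ ≤ _ := h1
    _ = _ := by
      congr 1
      funext x
      rw [Finset.sum_mul_sum]
      refine Finset.sum_congr rfl fun i _ => Finset.sum_congr rfl fun j _ => ?_
      ring

lemma ind_mul_mem {A : Type*} (E : Set A) (x y : A) :
    0 ≤ E.indicator (1 : A → ℝ) x * E.indicator 1 y ∧
      E.indicator (1 : A → ℝ) x * E.indicator 1 y ≤ 1 := by
  by_cases hx : x ∈ E <;> by_cases hy : y ∈ E <;> simp [hx, hy]

lemma corr_mem {A : Type*} [AddCommGroup A] {M : (A → ℝ) → ℝ} (hM : IsMean M) (E : Set A) (a : A) :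
    0 ≤ corr M E a ∧ corr M E a ≤ 1 := by
  have hb := corr_bdd E a 0
  simp only [add_zero] at hb
  refine ⟨hM.nonneg _ hb fun x => (ind_mul_mem E _ _).1, ?_⟩
  rw [← hM.one]
  exact hM.mono hb (BddFun.const 1) fun x => (ind_mul_mem E _ _).2

lemma main_aux {K : Type*} [Field K] [Countable K] [Infinite K] (h2 : (2 : K) ≠ 0)
    (E : Set (K × K)) (hE : PosUpperBanachDensity E) (z : K)
    (hno : ∀ p ∈ E, ∀ q ∈ E, (p.1 - q.1) ^ 2 - (p.2 - q.2) ^ 2 ≠ z) : False := by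
  obtain ⟨M, hM, hinv, hpos⟩ := exists_density_mean E hE
  have : Countable Kˣ := Units.val_injective.countable
  obtain ⟨T, hT, hTinv⟩ := exists_invariant_mean Kˣ
  -- linear change of coordinates, composed with the hyperbolic rotation by `t`
  let L : Kˣ → K × K → K × K := fun t d =>
    ((t * d.1 + (t : K)⁻¹ * d.2) / 2, (t * d.1 - (t : K)⁻¹ * d.2) / 2)
  have hLsub : ∀ t p q, L t (p - q) = L t p - L t q := by
    intro t p q
    ext <;> simp [L] <;> ring
  have hLneg : ∀ t p, L t (-p) = - L t p := by
    intro t p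
    have := hLsub t 0 p
    have h0 : L t 0 = 0 := by ext <;> simp [L]
    simpa [h0] using this
  let Φ : K × K → ℝ := fun d => T (fun t => corr M E (L t d))
  have hb : ∀ d, BddFun (fun t => corr M E (L t d)) := fun d => ⟨1, fun t => by
    rw [abs_of_nonneg (corr_mem hM E _).1]; exact (corr_mem hM E _).2⟩
  have hcneg : ∀ a, corr M E (-a) = corr M E a := by
    intro a
    have e1 := corr_sub hinv E 0 a
    have e2 := corr_sub hinv E a 0
    rw [zero_sub] at e1
    rw [sub_zero] at e2
    rw [e1, e2]
    simp only [mul_comm]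
  have hgood : GoodPhi ((M (E.indicator 1)) ^ 2) Φ := by
    refine ⟨fun d => hT.nonneg _ (hb d) fun t => (corr_mem hM E _).1, fun d => ?_, fun d => ?_, ?_⟩
    · rw [← hT.one]
      exact hT.mono (hb d) (BddFun.const 1) fun t => (corr_mem hM E _).2
    · simp only [Φ, hLneg, hcneg]
    · intro ι _ p c
      have hbij : ∀ i j, BddFun (fun t => c i * c j * corr M E (L t (p i - p j))) := fun i j =>
        (hb _).smul _
      have e : ∑ i, ∑ j, c i * c j * Φ (p i - p j) =
          T (fun t => ∑ i, ∑ j, c i * c j * corr M E (L t (p i - p j))) := by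
        rw [hT.sum _ _ (fun i => BddFun.sum (hbij i))]
        refine Finset.sum_congr rfl fun i _ => ?_
        rw [hT.sum _ _ (hbij i)]
        refine Finset.sum_congr rfl fun j _ => ?_
        rw [hT.smul _ _ (hb _)]
      rw [e, ← hT.const ((M (E.indicator 1)) ^ 2 * (∑ i, c i) ^ 2)]
      refine hT.mono (BddFun.const _) (BddFun.sum fun i => BddFun.sum (hbij i)) fun t => ?_
      simp only [hLsub]
      exact corr_psd hM hinv E (fun i => L t (p i)) c
  refine core (by positivity) hgood ?_ z ?_
  · intro t ht d
    have := hTinv (Units.mk0 t ht) _ (hb d)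
    simp only [Φ]
    rw [← this]
    congr 1
    funext s
    congr 1
    ext <;> simp [L] <;> ring
  · intro d hd
    have : ∀ t, corr M E (L t d) = 0 := by
      intro t
      rw [corr, ← hM.const 0]
      congr 1
      funext x
      by_cases hx : x ∈ E
      · have hy : x + L t d ∉ E := by
          intro hy
          refine hno _ hy _ hx ?_
          have ht : (t : K) ≠ 0 := t.ne_zero
          simp only [Prod.fst_add, Prod.snd_add, add_sub_cancel_left, L]
          rw [← hd]
          field_simp
          ring
        simp [hy]
      · simp [hx]
    simp only [Φ, this]
    exact hT.const 0

/-- Density strengthening of Davies' theorem over any countably infinite field of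
characteristic `≠ 2`: any set `E ⊆ K²` of positive upper Banach density realizes every
`z ∈ K` as `(x₁ − y₁)² − (x₂ − y₂)²` with `(x₁,x₂), (y₁,y₂) ∈ E`. -/
theorem statement12
    {K : Type*} [Field K] [Countable K] [Infinite K] (hchar : ringChar K ≠ 2)
    (E : Set (K × K)) (hE : PosUpperBanachDensity E) :
    ∀ z : K, ∃ p ∈ E, ∃ q ∈ E, (p.1 - q.1) ^ 2 - (p.2 - q.2) ^ 2 = z := by
  intro z
  by_contra hno
  push Not at hno
  exact main_aux (Ring.two_ne_zero hchar) E hE z hno
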